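/- arXiv:2505.15416 — 7 statements merged into one kernel-verified Lean document; each statement's English description precedes it below -/
import Mathlib

section
/- The complement of the Shrikhande graph contains no four pairwise nonadjacent vertices (it is 4K1-free), and for every natural number ℓ ≥ 6 it contains no induced cycle on ℓ vertices (it is C_ℓ-free); that is, there is no injective map f from Fin ℓ to its vertex set such that f(i) and f(j) are adjacent if and only if i and j are consecutive modulo ℓ. -/
/-!
The Shrikhande graph `H` is a Cayley graph on `(ZMod 4)²`, so the neighbourhood of each vertex is a
translate of that of the origin, a hexagon. A hexagon has no triangle, so `H` has no `K₄`.

If `x ≠ y` are nonadjacent neighbours of the origin, then `x + y` is either `0` or the vertex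
between them on the hexagon. Hence in an induced 4-cycle `u x v y` of `H` we have `x + y ≠ u + v`;
as `u` and `v` have only two common neighbours, the reflection `z ↦ u + v - z` fixes `x`, so
`u - v = 2(u - x)` is 2-torsion.

Six consecutive vertices `p₀, …, p₅` of an induced cycle in `Hᶜ` give the induced 4-cycles
`p₀ p₃ p₁ p₄` and `p₁ p₄ p₂ p₅` in `H`, so `p₀ - p₂ = (p₀ - p₁) + (p₁ - p₂)` is 2-torsion. But `p₀`
and `p₂` are adjacent in `H`, whose connection set has no 2-torsion.
-/

/-- The Shrikhande graph on `(ZMod 4) × (ZMod 4)`: distinct vertices `(a,b)` and `(c,d)` are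
adjacent iff `(a-c, b-d) ∈ {(0,1),(0,3),(1,0),(3,0),(1,1),(3,3)}` (arithmetic mod 4; this
difference set is closed under negation, so the symmetrization `fromRel` does not change it). -/
def shrikhande : SimpleGraph (ZMod 4 × ZMod 4) :=
  SimpleGraph.fromRel (fun u v =>
    (u.1 - v.1, u.2 - v.2) ∈
      ({(0, 1), (0, 3), (1, 0), (3, 0), (1, 1), (3, 3)} : Finset (ZMod 4 × ZMod 4)))

lemma consecutive_mod_iff_of_lt {ℓ i j : ℕ} (hij : i < j) (hj : j < ℓ)
    (h : i ≠ 0 ∨ j + 1 ≠ ℓ) : ((i + 1) % ℓ = j ∨ (j + 1) % ℓ = i) ↔ i + 1 = j := by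
  have no_wrap : (j + 1) % ℓ ≠ i := by
    obtain hlt | rfl : j + 1 < ℓ ∨ j + 1 = ℓ := by omega
    · rw [Nat.mod_eq_of_lt hlt]
      omega
    · rw [Nat.mod_self]
      omega
  rw [Nat.mod_eq_of_lt (by omega), or_iff_left no_wrap]

instance : DecidableRel shrikhande.Adj :=
  inferInstanceAs (DecidableRel (SimpleGraph.fromRel _).Adj)

lemma shrikhande_adj_sub_right (u v w : ZMod 4 × ZMod 4) :
    shrikhande.Adj (u - w) (v - w) ↔ shrikhande.Adj u v := by
  simp [shrikhande]

lemma shrikhande_compl_adj_sub_right (u v w : ZMod 4 × ZMod 4) :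
    shrikhandeᶜ.Adj (u - w) (v - w) ↔ shrikhandeᶜ.Adj u v := by
  simp [SimpleGraph.compl_adj, shrikhande_adj_sub_right]

lemma shrikhande_no_triangle_of_adj_zero : ∀ x, shrikhande.Adj 0 x →
    ∀ y, shrikhande.Adj 0 y → shrikhande.Adj x y →
      ∀ z, shrikhande.Adj 0 z → shrikhande.Adj x z → ¬ shrikhande.Adj y z := by
  decide

lemma shrikhande_cliqueFree_four : shrikhande.CliqueFree 4 := by
  rw [SimpleGraph.cliqueFree_iff]
  refine ⟨fun f => ?_⟩
  have adj (i j : Fin 4) (hij : i ≠ j) : shrikhande.Adj (f i - f 0) (f j - f 0) :=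
    (shrikhande_adj_sub_right _ _ _).2 (f.toHom.map_adj hij)
  have adj_zero (j : Fin 4) (hj : 0 ≠ j) : shrikhande.Adj 0 (f j - f 0) := by
    simpa only [sub_self] using adj 0 j hj
  exact shrikhande_no_triangle_of_adj_zero _ (adj_zero 1 (by decide))
    _ (adj_zero 2 (by decide)) (adj 1 2 (by decide))
    _ (adj_zero 3 (by decide)) (adj 1 3 (by decide)) (adj 2 3 (by decide))

lemma shrikhande_two_nsmul_eq_zero_of_induced_four_cycle_zero : ∀ x, shrikhande.Adj 0 x →
    ∀ y, shrikhande.Adj 0 y → shrikhandeᶜ.Adj x y →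
      ∀ u, shrikhande.Adj u x → shrikhande.Adj u y → shrikhandeᶜ.Adj u 0 → 2 • u = 0 := by
  decide

lemma shrikhande_two_nsmul_sub_eq_zero_of_induced_four_cycle {u v x y : ZMod 4 × ZMod 4}
    (huv : shrikhandeᶜ.Adj u v) (hxy : shrikhandeᶜ.Adj x y)
    (hux : shrikhande.Adj u x) (huy : shrikhande.Adj u y)
    (hvx : shrikhande.Adj v x) (hvy : shrikhande.Adj v y) : 2 • (u - v) = 0 := by
  rw [← shrikhande_compl_adj_sub_right _ _ v] at huv hxy
  rw [← shrikhande_adj_sub_right _ _ v] at hux huy hvx hvy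
  rw [sub_self] at huv hvx hvy
  exact shrikhande_two_nsmul_eq_zero_of_induced_four_cycle_zero _ hvx _ hvy hxy _ hux huy huv

lemma shrikhande_two_nsmul_sub_ne_zero_of_adj {u v : ZMod 4 × ZMod 4}
    (h : shrikhande.Adj u v) : 2 • (u - v) ≠ 0 := by
  have adj_zero : ∀ w, shrikhande.Adj w 0 → 2 • w ≠ 0 := by decide
  exact adj_zero (u - v) (by rwa [← sub_self v, shrikhande_adj_sub_right])

-- Nothing is assumed about the pair `(0, 5)`, so `p` may be an induced path or an induced cycle.
lemma shrikhande_compl_not_induced_six_path_or_cycle (p : Fin 6 ↪ ZMod 4 × ZMod 4) :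
    ¬ ∀ i j : Fin 6, i < j → (i ≠ 0 ∨ j ≠ 5) →
      (shrikhandeᶜ.Adj (p i) (p j) ↔ i.val + 1 = j.val) := by
  intro hp
  have near (i j : Fin 6) (hij : i.val + 1 = j.val) : shrikhandeᶜ.Adj (p i) (p j) :=
    (hp i j (by omega) (by omega)).2 hij
  have far (i j : Fin 6) (hij : i.val + 1 < j.val) (h : i ≠ 0 ∨ j ≠ 5) :
      shrikhande.Adj (p i) (p j) := by
    have hnot := (hp i j (by omega) h).not.2 hij.ne
    rw [SimpleGraph.compl_adj, not_and, not_not] at hnot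
    exact hnot (p.injective.ne (by omega))
  have h₀₁ : 2 • (p 0 - p 1) = 0 :=
    shrikhande_two_nsmul_sub_eq_zero_of_induced_four_cycle (near 0 1 rfl) (near 3 4 rfl)
      (far 0 3 (by decide) (by decide)) (far 0 4 (by decide) (by decide))
      (far 1 3 (by decide) (by decide)) (far 1 4 (by decide) (by decide))
  have h₁₂ : 2 • (p 1 - p 2) = 0 :=
    shrikhande_two_nsmul_sub_eq_zero_of_induced_four_cycle (near 1 2 rfl) (near 4 5 rfl)
      (far 1 4 (by decide) (by decide)) (far 1 5 (by decide) (by decide))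
      (far 2 4 (by decide) (by decide)) (far 2 5 (by decide) (by decide))
  apply shrikhande_two_nsmul_sub_ne_zero_of_adj (far 0 2 (by decide) (by decide))
  rw [← sub_add_sub_cancel _ (p 1), nsmul_add, h₀₁, h₁₂, add_zero]

/-- The complement of the Shrikhande graph is `4K₁`-free and, for every `ℓ ≥ 6`, has no
induced cycle on `ℓ` vertices. -/
theorem complement_shrikhande_4K1_free_and_Cl_free :
    (¬ ∃ a b c d : ZMod 4 × ZMod 4,
        a ≠ b ∧ a ≠ c ∧ a ≠ d ∧ b ≠ c ∧ b ≠ d ∧ c ≠ d ∧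
        ¬ shrikhandeᶜ.Adj a b ∧ ¬ shrikhandeᶜ.Adj a c ∧ ¬ shrikhandeᶜ.Adj a d ∧
        ¬ shrikhandeᶜ.Adj b c ∧ ¬ shrikhandeᶜ.Adj b d ∧ ¬ shrikhandeᶜ.Adj c d) ∧
    (∀ ℓ : ℕ, 6 ≤ ℓ →
      ¬ ∃ f : Fin ℓ → ZMod 4 × ZMod 4, Function.Injective f ∧
        ∀ i j : Fin ℓ, shrikhandeᶜ.Adj (f i) (f j) ↔
          ((i.val + 1) % ℓ = j.val ∨ (j.val + 1) % ℓ = i.val)) := by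
  constructor
  · rintro ⟨a, b, c, d, hab, hac, had, hbc, hbd, hcd, h⟩
    simp only [SimpleGraph.compl_adj, not_and, not_not] at h
    refine shrikhande_cliqueFree_four {a, b, c, d} (.insert ?_ ?_)
    · exact SimpleGraph.is3Clique_triple_iff.2 (by tauto)
    · simp only [Finset.forall_mem_insert, Finset.mem_singleton, forall_eq]
      tauto
  · rintro ℓ hℓ ⟨f, hf, hadj⟩
    refine shrikhande_compl_not_induced_six_path_or_cycle
      ((Fin.castLEEmb hℓ).trans ⟨f, hf⟩) fun i j hij h => (hadj _ _).trans ?_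
    exact consecutive_mod_iff_of_lt (i := i) (j := j) hij (by omega) (by omega)
end

section
/- For any two distinct vertices u and v of the Shrikhande graph, the set of common neighbors of u and v, i.e., {w : w is adjacent to u and w is adjacent to v}, has exactly two elements. -/
/-!
The graph is the circulant graph on `(ZMod 4) × (ZMod 4)` with jump set
`S = {±(0,1), ±(1,0), ±(1,1)}`. As `S = -S`, the common neighbors of `u` and `v` are the `w` with
`u - w ∈ S` and `w - v ∈ S`, so they correspond to the representations of `u - v` as a sum of two
elements of `S`. There are exactly two for every nonzero difference: `S` is a `(16, 6, 2)`
difference set.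
-/

section CirculantGraph

open SimpleGraph
open scoped Pointwise

variable {G : Type*} [AddGroup G]

lemma circulantGraph_adj_iff_sub_mem {S : Set G} (hneg : -S = S) (hzero : 0 ∉ S) {u v : G} :
    (circulantGraph S).Adj u v ↔ u - v ∈ S := by
  have hswap : v - u ∈ S ↔ u - v ∈ S := by
    rw [← Set.neg_mem_neg, hneg, neg_sub]
  have hne : u - v ∈ S → u ≠ v := by
    rintro huv rfl
    exact hzero (sub_self u ▸ huv)
  rw [circulantGraph_adj, hswap, or_self, and_iff_right_of_imp hne]

lemma ncard_commonNeighbors_circulantGraph [DecidableEq G] {S : Finset G} (hneg : -S = S)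
    (hzero : 0 ∉ S) (u v : G) :
    ((circulantGraph (S : Set G)).commonNeighbors u v).ncard = S.addConvolution S (u - v) := by
  have hadj (x y : G) : (circulantGraph (S : Set G)).Adj x y ↔ x - y ∈ S :=
    circulantGraph_adj_iff_sub_mem (by rw [← Finset.coe_neg, hneg]) hzero
  have hcommon : (circulantGraph (S : Set G)).commonNeighbors u v =
      -(((-u +ᵥ S) ∩ (-v +ᵥ S) : Finset G) : Set G) := by
    ext w
    simp only [mem_commonNeighbors, hadj, Set.mem_neg, Finset.mem_coe, Finset.mem_inter,
      ← Finset.neg_vadd_mem_iff, neg_neg, vadd_eq_add, sub_eq_add_neg]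
  rw [hcommon, Set.ncard_neg, Set.ncard_coe_finset, Finset.card_vadd_inter_vadd, hneg, neg_neg,
    sub_eq_add_neg]

end CirculantGraph

/-- The jump set that presents the Shrikhande graph as a circulant graph. -/
def shrikhandeJumps : Finset (ZMod 4 × ZMod 4) :=
  {(0, 1), (0, 3), (1, 0), (3, 0), (1, 1), (3, 3)}

lemma shrikhande_eq_circulantGraph :
    shrikhande = SimpleGraph.circulantGraph (shrikhandeJumps : Set (ZMod 4 × ZMod 4)) :=
  rfl

open scoped Pointwise in
lemma neg_shrikhandeJumps : -shrikhandeJumps = shrikhandeJumps := by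
  decide

lemma zero_notMem_shrikhandeJumps : 0 ∉ shrikhandeJumps := by
  decide

lemma addConvolution_shrikhandeJumps {d : ZMod 4 × ZMod 4} (hd : d ≠ 0) :
    shrikhandeJumps.addConvolution shrikhandeJumps d = 2 := by
  decide +revert

/-- Any two distinct vertices of the Shrikhande graph have exactly two common neighbors. -/
theorem shrikhande_two_common_neighbors (u v : ZMod 4 × ZMod 4) (huv : u ≠ v) :
    {w : ZMod 4 × ZMod 4 | shrikhande.Adj w u ∧ shrikhande.Adj w v}.ncard = 2 := by
  have hcommon : {w | shrikhande.Adj w u ∧ shrikhande.Adj w v} = shrikhande.commonNeighbors u v :=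
    Set.ext fun w => and_congr (shrikhande.adj_comm w u) (shrikhande.adj_comm w v)
  rw [hcommon, shrikhande_eq_circulantGraph,
    ncard_commonNeighbors_circulantGraph neg_shrikhandeJumps zero_notMem_shrikhandeJumps]
  exact addConvolution_shrikhandeJumps (sub_ne_zero.mpr huv)
end

section
/- The Shrikhande graph contains no induced subgraph isomorphic to the complement of the path on 6 vertices; that is, there is no injective map f from Fin 6 to its vertex set such that f(i) and f(j) are adjacent if and only if i ≠ j and |i − j| ≥ 2. -/
open SimpleGraph

theorem completeBipartiteGraph_free_of_encard_commonNeighbors_lt {V α β : Type*} [Nontrivial α]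
    {G : SimpleGraph V}
    (h : ∀ u v, u ≠ v → (G.commonNeighbors u v).encard < ENat.card β) :
    (completeBipartiteGraph α β).Free G := by
  rintro ⟨f⟩
  obtain ⟨a, b, hab⟩ := exists_pair_ne α
  have hne : f (.inl a) ≠ f (.inl b) := f.injective.ne (Sum.inl_injective.ne hab)
  have hcommon (c : β) : f (.inr c) ∈ G.commonNeighbors (f (.inl a)) (f (.inl b)) :=
    ⟨f.toHom.map_adj (by simp), f.toHom.map_adj (by simp)⟩
  have hinj : Function.Injective fun c : β => f (.inr c) := f.injective.comp Sum.inr_injective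
  have hle : ENat.card β ≤ (G.commonNeighbors (f (.inl a)) (f (.inl b))).encard :=
    ENat.card_le_card_of_injective (hinj.codRestrict hcommon)
  exact (h _ _ hne).not_ge hle

theorem compl_pathGraph_adj_iff {n : ℕ} {i j : Fin n} :
    (pathGraph n)ᶜ.Adj i j ↔ i ≠ j ∧ 2 ≤ |(i.val : ℤ) - (j.val : ℤ)| := by
  rw [compl_adj, pathGraph_adj, ne_eq, Fin.ext_iff, le_abs]
  omega

theorem completeBipartiteGraph_isContained_compl_pathGraph (m n : ℕ) :
    completeBipartiteGraph (Fin m) (Fin n) ⊑ (pathGraph (m + 1 + n))ᶜ := by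
  let f : Fin m ⊕ Fin n → Fin (m + 1 + n) :=
    Sum.elim (fun i => i.castSucc.castAdd n) (Fin.natAdd (m + 1))
  have hadj (i : Fin m) (j : Fin n) : (pathGraph (m + 1 + n))ᶜ.Adj (f (.inl i)) (f (.inr j)) := by
    simp only [compl_adj, pathGraph_adj, f, Sum.elim_inl, Sum.elim_inr, ne_eq, Fin.ext_iff,
      Fin.val_castAdd, Fin.val_castSucc, Fin.val_natAdd]
    omega
  refine ⟨⟨f, ?_⟩, ?_⟩
  · rintro (i | i) (j | j) hij
    · simp at hij
    · exact hadj i j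
    · exact (hadj j i).symm
    · simp at hij
  · refine Function.Injective.sumElim ?_ (Fin.natAdd_injective n (m + 1)) fun i j => (hadj i j).ne
    exact (Fin.castAdd_injective (m + 1) n).comp (Fin.castSucc_injective m)

section Circulant

variable {G : Type*} [AddGroup G] (s : Set G)

theorem circulantGraph_commonNeighbors_translate (u v d : G) :
    (circulantGraph s).commonNeighbors (u + d) (v + d) =
      Equiv.addRight d '' (circulantGraph s).commonNeighbors u v := by
  ext w
  obtain ⟨x, rfl⟩ := (Equiv.addRight d).surjective w
  rw [(Equiv.addRight d).injective.mem_set_image]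
  simp only [mem_commonNeighbors, Equiv.coe_addRight, circulantGraph_adj_translate]

theorem circulantGraph_encard_commonNeighbors (u v : G) :
    ((circulantGraph s).commonNeighbors u v).encard =
      ((circulantGraph s).commonNeighbors (u - v) 0).encard := by
  have h := circulantGraph_commonNeighbors_translate s (u - v) 0 v
  rw [sub_add_cancel, zero_add] at h
  rw [h, (Equiv.addRight v).injective.encard_image]

end Circulant

theorem shrikhande_eq_circulantGraph_s5 :
    shrikhande = circulantGraph {(0, 1), (0, 3), (1, 0), (3, 0), (1, 1), (3, 3)} := by
  ext u v
  simp [shrikhande, circulantGraph, Prod.ext_iff]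

instance inst_s5 : DecidableRel shrikhande.Adj :=
  inferInstanceAs (DecidableRel (fromRel _).Adj)

theorem shrikhande_encard_commonNeighbors {u v : ZMod 4 × ZMod 4} (h : u ≠ v) :
    (shrikhande.commonNeighbors u v).encard = 2 := by
  have card_zero : ∀ d : ZMod 4 × ZMod 4, d ≠ 0 →
      (shrikhande.commonNeighbors d 0).toFinset.card = 2 := by
    decide
  have translate : (shrikhande.commonNeighbors u v).encard =
      (shrikhande.commonNeighbors (u - v) 0).encard := by
    rw [shrikhande_eq_circulantGraph_s5, circulantGraph_encard_commonNeighbors]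
  rw [translate, Set.encard_eq_coe_toFinset_card, card_zero _ (sub_ne_zero.mpr h), Nat.cast_ofNat]

theorem completeBipartiteGraph_two_three_free_shrikhande :
    (completeBipartiteGraph (Fin 2) (Fin 3)).Free shrikhande := by
  refine completeBipartiteGraph_free_of_encard_commonNeighbors_lt fun u v h => ?_
  rw [shrikhande_encard_commonNeighbors h, ENat.card_eq_coe_fintype_card, Fintype.card_fin]
  norm_num

theorem shrikhande_no_induced_complement_P6_general : (pathGraph 6)ᶜ.Free shrikhande := fun h =>
  completeBipartiteGraph_two_three_free_shrikhande
    ((completeBipartiteGraph_isContained_compl_pathGraph 2 3).trans h)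

/-- The Shrikhande graph has no induced subgraph isomorphic to the complement of the path on
six vertices. -/
theorem shrikhande_no_induced_complement_P6 :
    ¬ ∃ f : Fin 6 → ZMod 4 × ZMod 4, Function.Injective f ∧
      ∀ i j : Fin 6, shrikhande.Adj (f i) (f j) ↔
        (i ≠ j ∧ 2 ≤ |(i.val : ℤ) - (j.val : ℤ)|) := by
  rintro ⟨f, hf, hadj⟩
  exact shrikhande_no_induced_complement_P6_general
    ⟨⟨f, fun h => (hadj _ _).mpr (compl_pathGraph_adj_iff.mp h)⟩, hf⟩
end

section
/- In the complement of the Shrikhande graph, for any three vertices u, v, r with r ≠ u and r ≠ v, there exists a vertex w belonging to the closed neighborhood of r (so w = r or w is adjacent to r) such that w is not in the closed neighborhood of u and not in the closed neighborhood of v. (This is the combinatorial core of the robber's strategy showing that two cops cannot win on this graph.) -/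
section TwoCommonNeighbors

variable {V : Type*} {G : SimpleGraph V} {u v r w : V}

theorem eq_or_compl_adj_iff_not_adj : (w = u ∨ Gᶜ.Adj u w) ↔ ¬ G.Adj u w := by
  rw [SimpleGraph.compl_adj]
  refine ⟨?_, fun h => or_iff_not_imp_left.mpr fun hwu => ⟨Ne.symm hwu, h⟩⟩
  rintro (rfl | ⟨-, h⟩)
  exacts [G.irrefl, h]

theorem exists_mem_commonNeighbors_not_adj
    (hG : Pairwise fun x y => (G.commonNeighbors x y).ncard = 2)
    (huv : u ≠ v) (hru : r ≠ u) (hrv : r ≠ v) :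
    ∃ w ∈ G.commonNeighbors u v, ¬ G.Adj r w := by
  by_contra! hr
  obtain ⟨a, b, hab, hcommon⟩ := Set.ncard_eq_two.mp (hG huv)
  have ha : a ∈ G.commonNeighbors u v := hcommon ▸ Set.mem_insert a {b}
  have hb : b ∈ G.commonNeighbors u v := hcommon ▸ Set.mem_insert_of_mem a rfl
  have hsub : {u, v, r} ⊆ G.commonNeighbors a b := by
    rintro x (rfl | rfl | rfl)
    exacts [⟨ha.1.symm, hb.1.symm⟩, ⟨ha.2.symm, hb.2.symm⟩, ⟨(hr a ha).symm, (hr b hb).symm⟩]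
  have hthree : ({u, v, r} : Set V).ncard = 3 :=
    Set.ncard_eq_three.mpr ⟨u, v, r, huv, hru.symm, hrv.symm, rfl⟩
  have hfin : (G.commonNeighbors a b).Finite :=
    Set.finite_of_ncard_ne_zero (by rw [hG hab]; decide)
  have hle := Set.ncard_le_ncard hsub hfin
  rw [hthree, hG hab] at hle
  exact absurd hle (by decide)

theorem exists_adj_not_adj (hG : Pairwise fun x y => (G.commonNeighbors x y).ncard = 2)
    (hru : r ≠ u) : ∃ w, G.Adj u w ∧ ¬ G.Adj r w := by
  obtain ⟨a, hra, hua⟩ : (G.commonNeighbors r u).Nonempty :=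
    Set.nonempty_of_ncard_ne_zero (by rw [hG hru]; decide)
  obtain ⟨w, hw, hrw⟩ := exists_mem_commonNeighbors_not_adj hG hua.ne hru hra.ne
  exact ⟨w, hw.1, hrw⟩

theorem complement_shrikhande_robber_escape_general
    (hG : Pairwise fun x y => (G.commonNeighbors x y).ncard = 2) (hru : r ≠ u) (hrv : r ≠ v) :
    ∃ w, (w = r ∨ Gᶜ.Adj r w) ∧ ¬ (w = u ∨ Gᶜ.Adj u w) ∧ ¬ (w = v ∨ Gᶜ.Adj v w) := by
  simp only [eq_or_compl_adj_iff_not_adj, not_not]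
  rcases eq_or_ne u v with rfl | huv
  · obtain ⟨w, huw, hrw⟩ := exists_adj_not_adj hG hru
    exact ⟨w, hrw, huw, huw⟩
  · obtain ⟨w, ⟨huw, hvw⟩, hrw⟩ := exists_mem_commonNeighbors_not_adj hG huv hru hrv
    exact ⟨w, hrw, huw, hvw⟩

end TwoCommonNeighbors

theorem pairwise_ncard_commonNeighbors_of_isSRGWith {V : Type*} [Fintype V]
    {G : SimpleGraph V} [DecidableRel G.Adj] {n k l : ℕ} (hG : G.IsSRGWith n k l l) :
    Pairwise fun x y => (G.commonNeighbors x y).ncard = l := by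
  intro x y hxy
  rw [← Nat.card_coe_set_eq, Nat.card_eq_fintype_card]
  by_cases h : G.Adj x y
  · exact hG.of_adj x y h
  · exact hG.of_not_adj hxy h

theorem shrikhande_isSRGWith : shrikhande.IsSRGWith 16 6 2 2 where
  card := by decide
  regular := by unfold SimpleGraph.IsRegularOfDegree; decide +kernel
  of_adj := by decide +kernel
  of_not_adj := by unfold Pairwise; decide +kernel

/-- In the complement of the Shrikhande graph, for any two cop positions `u, v` and any robber
position `r` distinct from both, some vertex of the closed neighborhood of `r` lies outside
the closed neighborhoods of both `u` and `v`. -/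
theorem complement_shrikhande_robber_escape (u v r : ZMod 4 × ZMod 4)
    (hru : r ≠ u) (hrv : r ≠ v) :
    ∃ w : ZMod 4 × ZMod 4, (w = r ∨ shrikhandeᶜ.Adj r w) ∧
      ¬ (w = u ∨ shrikhandeᶜ.Adj u w) ∧ ¬ (w = v ∨ shrikhandeᶜ.Adj v w) :=
  complement_shrikhande_robber_escape_general
    (pairwise_ncard_commonNeighbors_of_isSRGWith shrikhande_isSRGWith) hru hrv
end

section
/- Let G be a 4K1-free finite simple graph, and suppose v1, v2, v3, v4, v5 are distinct vertices inducing a 5-cycle (vi is adjacent to vj if and only if i − j ≡ ±1 mod 5). Then the set of vertices w ∉ {v1, v2, v3, v4, v5} that are adjacent to exactly one vertex of {v1, v2, v3, v4, v5} is a clique, i.e., any two distinct such vertices are adjacent in G. -/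
/-!
In a `4K₁`-free graph the common non-neighbours of two nonadjacent vertices `a`, `b` form a clique:
a nonadjacent pair among them would complete `a`, `b` to an independent set of size four.
If `a` and `b` each have at most one neighbour on an induced 5-cycle, then at least three vertices
of the cycle are common non-neighbours; any three of these form a triangle, but the 5-cycle has
none.
-/

open SimpleGraph

section Cliques

variable {V W : Type*} {G : SimpleGraph V} {H : SimpleGraph W}

theorem cliqueFreeOn_commonNeighbors {n : ℕ} {a b : V} (hG : G.CliqueFree (n + 2))
    (hab : G.Adj a b) : G.CliqueFreeOn (G.commonNeighbors a b) n := by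
  have ha : G.CliqueFreeOn (Set.univ ∩ G.neighborSet a) (n + 1) :=
    CliqueFreeOn.of_succ G hG.cliqueFreeOn (Set.mem_univ a)
  rw [Set.univ_inter] at ha
  exact CliqueFreeOn.of_succ G ha hab

theorem isClique_commonNeighbors_compl {a b : V} (hG : G.IndepSetFree 4) (hab : Gᶜ.Adj a b) :
    G.IsClique (Gᶜ.commonNeighbors a b) := by
  have hfree : Gᶜ.CliqueFreeOn (Gᶜ.commonNeighbors a b) 2 :=
    cliqueFreeOn_commonNeighbors ((cliqueFree_compl G).2 hG) hab
  rw [cliqueFreeOn_two] at hfree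
  exact fun x hx y hy hxy => by simpa [hxy] using hfree hx hy hxy

theorem encard_lt_of_isClique_of_cliqueFreeOn {s t : Set V} {n : ℕ} (hs : G.CliqueFreeOn s n)
    (hts : t ⊆ s) (ht : G.IsClique t) : t.encard < n := by
  by_contra! hcard
  obtain ⟨u, hut, hu⟩ := Set.exists_subset_encard_eq hcard
  lift u to Finset V using Set.finite_of_encard_eq_coe hu
  rw [Set.encard_coe_eq_coe_finsetCard, Nat.cast_inj] at hu
  exact hs (hut.trans hts) ⟨ht.subset hut, hu⟩

theorem cliqueFreeOn_range {n : ℕ} (f : H ↪g G) (hH : H.CliqueFree n) :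
    G.CliqueFreeOn (Set.range f) n :=
  (cliqueFree_induce_iff _ _ _).1 (hH.comap ⟨f.isoInduceRange.symm.toCopy⟩)

theorem indepSetFree_four_iff :
    G.IndepSetFree 4 ↔ ¬ ∃ a b c d : V,
      a ≠ b ∧ a ≠ c ∧ a ≠ d ∧ b ≠ c ∧ b ≠ d ∧ c ≠ d ∧
      ¬ G.Adj a b ∧ ¬ G.Adj a c ∧ ¬ G.Adj a d ∧ ¬ G.Adj b c ∧ ¬ G.Adj b d ∧ ¬ G.Adj c d := by
  classical
  constructor
  · rintro hG ⟨a, b, c, d, hab, hac, had, hbc, hbd, hcd, hnadj⟩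
    refine hG {a, b, c, d} ⟨?_, by simp [*]⟩
    simp [Set.pairwise_insert, hnadj, G.adj_comm]
  · rintro hG t ⟨ht, hcard⟩
    obtain ⟨a, u, hau, rfl, hu⟩ := Finset.card_eq_succ.1 hcard
    obtain ⟨b, c, d, hbc, hbd, hcd, rfl⟩ := Finset.card_eq_three.1 hu
    refine hG ⟨a, b, c, d, ?_⟩
    simp only [Finset.coe_insert, Finset.coe_singleton, Set.pairwise_insert,
      Set.mem_insert_iff, Set.mem_singleton_iff, Finset.mem_insert, Finset.mem_singleton,
      forall_eq_or_imp, forall_eq, ne_eq] at ht hau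
    grind

theorem cycleGraph_cliqueFree_three (n : ℕ) : (cycleGraph (n + 4)).CliqueFree 3 := by
  intro t ht
  obtain ⟨a, b, c, hab, hac, hbc, -⟩ := is3Clique_iff.1 ht
  have h1 : (1 : Fin (n + 4)) ≠ 0 := by simp
  have h3 : (3 : Fin (n + 4)) ≠ 0 := by
    simp [Fin.ext_iff, Nat.mod_eq_of_lt (show 3 < n + 4 by omega)]
  -- Each summand is `±1`, so the sum is `±1` or `±3`.
  have hsum : (a - b) + (b - c) + (c - a) = 0 := by abel
  rw [cycleGraph_adj] at hab hac hbc
  grind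

end Cliques

theorem encard_inter_range_of_injective {ι V : Type*} [Fintype ι] {v : ι → V}
    (hv : Function.Injective v) (s : Set V) [DecidablePred (v · ∈ s)] :
    (s ∩ Set.range v).encard = Finset.card {i | v i ∈ s} := by
  rw [← Set.image_preimage_eq_inter_range, hv.encard_image, ← Set.encard_coe_eq_coe_finsetCard]
  congr 1
  ext i
  simp

theorem fourK1_free_one_attachment_clique_general {V : Type*} {G : SimpleGraph V} {s : Set V}
    {k : ℕ} (hG : G.IndepSetFree 4) (hs : G.CliqueFreeOn s 3) (hcard : 2 * k + 3 ≤ s.encard) :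
    G.IsClique {w | w ∉ s ∧ (G.neighborSet w ∩ s).encard ≤ k} := by
  rintro a ⟨has, hak⟩ b ⟨hbs, hbk⟩ hne
  by_contra hab
  let t := s \ (G.neighborSet a ∩ s ∪ G.neighborSet b ∩ s)
  have hclique : G.IsClique t := by
    refine (isClique_commonNeighbors_compl hG ((compl_adj ..).2 ⟨hne, hab⟩)).subset ?_
    rintro c ⟨hcs, hc⟩
    simp only [Set.mem_union, Set.mem_inter_iff, mem_neighborSet, hcs, and_true, not_or] at hc
    simp only [mem_commonNeighbors, compl_adj]
    exact ⟨⟨(ne_of_mem_of_not_mem hcs has).symm, hc.1⟩,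
      ⟨(ne_of_mem_of_not_mem hcs hbs).symm, hc.2⟩⟩
  have hlt : t.encard < 3 := encard_lt_of_isClique_of_cliqueFreeOn hs Set.sdiff_subset hclique
  refine hcard.not_gt ?_
  calc
    s.encard ≤ t.encard + (G.neighborSet a ∩ s ∪ G.neighborSet b ∩ s).encard :=
      Set.encard_le_encard_sdiff_add_encard ..
    _ ≤ t.encard + (k + k) := by grw [Set.encard_union_le, hak, hbk]
    _ < 3 + (k + k) := (ENat.add_lt_add_iff_right (by simp)).2 hlt
    _ = 2 * k + 3 := by ring

/-- In a `4K₁`-free graph, if `v₁,…,v₅` induce a 5-cycle, then the vertices outside the cycle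
that are adjacent to exactly one vertex of the cycle form a clique. -/
theorem fourK1_free_one_attachment_clique {V : Type*} [Fintype V] [DecidableEq V]
    (G : SimpleGraph V) [DecidableRel G.Adj]
    (hfree : ¬ ∃ a b c d : V, a ≠ b ∧ a ≠ c ∧ a ≠ d ∧ b ≠ c ∧ b ≠ d ∧ c ≠ d ∧
      ¬ G.Adj a b ∧ ¬ G.Adj a c ∧ ¬ G.Adj a d ∧ ¬ G.Adj b c ∧ ¬ G.Adj b d ∧ ¬ G.Adj c d)
    (v : Fin 5 → V) (hinj : Function.Injective v)
    (hC5 : ∀ i j : Fin 5, G.Adj (v i) (v j) ↔ (j = i + 1 ∨ i = j + 1)) :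
    ∀ a ∈ {w : V | (∀ i : Fin 5, w ≠ v i) ∧
        ((Finset.univ : Finset (Fin 5)).filter (fun i => G.Adj w (v i))).card = 1},
      ∀ b ∈ {w : V | (∀ i : Fin 5, w ≠ v i) ∧
        ((Finset.univ : Finset (Fin 5)).filter (fun i => G.Adj w (v i))).card = 1},
        a ≠ b → G.Adj a b := by
  let f : cycleGraph 5 ↪g G :=
    ⟨⟨v, hinj⟩, by simp [hC5, cycleGraph_adj, sub_eq_iff_eq_add', or_comm]⟩
  have hrange : G.CliqueFreeOn (Set.range v) 3 :=
    cliqueFreeOn_range f (cycleGraph_cliqueFree_three 1)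
  have hcard : 2 * (1 : ℕ) + 3 ≤ (Set.range v).encard := by
    norm_num [← Set.image_univ, hinj.encard_image]
  have hclique :=
    fourK1_free_one_attachment_clique_general (indepSetFree_four_iff.2 hfree) hrange hcard
  refine hclique.subset ?_
  rintro w ⟨hw, hw1⟩
  refine ⟨fun ⟨i, hi⟩ => hw i hi.symm, ?_⟩
  simp [encard_inter_range_of_injective hinj, hw1]
end

section
/- Let G be a 4K1-free finite simple graph, let u be a vertex whose neighborhood is exactly {v1, v2} (with v1 ≠ v2), and let a be a vertex with a ∉ {u, v1, v2} and a not adjacent to u. Let G' be the subgraph of G induced on the vertices other than u and v2. If a and v1 are connected by a path in G', then the distance from a to v1 in G' is at most 4. -/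
/-!
Adjacent vertices have distances from a fixed vertex `x` that differ by at most one. So if `y` is
at distance more than `2k` from `x`, vertices chosen at distances `0, 2, …, 2k` from `x` form an
independent set of size `k + 1` avoiding `y`. In an induced subgraph that omits `u` and contains no
neighbour of `u` other than `y`, this set together with `u` is independent of size `k + 2`; for
`k = 2` these are four pairwise nonadjacent vertices.
-/

section Layers

variable {W : Type*} {H : SimpleGraph W} {x y : W}

lemma exists_dist_eq_of_le_dist {n : ℕ} (hn : n ≤ H.dist x y) : ∃ z, H.dist x z = n := by
  rcases Nat.eq_zero_or_pos n with rfl | hpos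
  · exact ⟨x, SimpleGraph.dist_self⟩
  · obtain ⟨p, hp⟩ := SimpleGraph.exists_walk_of_dist_ne_zero (hpos.trans_le hn).ne'
    refine ⟨p.getVert n, ?_⟩
    rw [← SimpleGraph.length_eq_dist_of_subwalk hp (p.isSubwalk_take n),
      SimpleGraph.Walk.take_length, min_eq_left (hp ▸ hn)]

lemma exists_isNIndepSet_notMem_of_lt_dist {k : ℕ} (hk : 2 * k < H.dist x y) :
    ∃ t, H.IsNIndepSet (k + 1) t ∧ y ∉ t := by
  have hlayer (i : Fin (k + 1)) : ∃ z, H.dist x z = 2 * (i : ℕ) :=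
    exists_dist_eq_of_le_dist (y := y) (by omega)
  choose f hf using hlayer
  have hinj : Function.Injective f := fun i j hij ↦
    Fin.ext (Nat.eq_of_mul_eq_mul_left two_pos (by rw [← hf, hij, hf]))
  refine ⟨Finset.univ.map ⟨f, hinj⟩, ⟨?_, by simp⟩, fun hy ↦ ?_⟩
  · simp only [Finset.coe_map, Finset.coe_univ, Function.Embedding.coeFn_mk, Set.image_univ]
    rintro _ ⟨i, rfl⟩ _ ⟨j, rfl⟩ hne hadj
    have hij : i ≠ j := ne_of_apply_ne f hne
    have hdist := hadj.diff_dist_adj (u := x)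
    rw [hf, hf] at hdist
    omega
  · obtain ⟨i, -, hi : f i = y⟩ := Finset.mem_map.1 hy
    rw [← hi, hf] at hk
    omega

end Layers

section IndependentSets

variable {V : Type*} {G : SimpleGraph V}

lemma isNIndepSet_cons {n : ℕ} {t : Finset V} {u : V} (ht : G.IsNIndepSet n t) (hu : u ∉ t)
    (hadj : ∀ w ∈ t, ¬ G.Adj u w) : G.IsNIndepSet (n + 1) (t.cons u hu) where
  isIndepSet := by
    rw [Finset.coe_cons]
    exact ht.isIndepSet.insert fun w hw _ ↦ ⟨hadj w hw, fun h ↦ hadj w hw h.symm⟩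
  card_eq := by rw [Finset.card_cons, ht.card_eq]

lemma isNIndepSet_map_subtype {s : Set V} {n : ℕ} {t : Finset s}
    (ht : (G.induce s).IsNIndepSet n t) :
    G.IsNIndepSet n (t.map (Function.Embedding.subtype (· ∈ s))) where
  isIndepSet := by
    rw [Finset.coe_map]
    rintro _ ⟨v, hv, rfl⟩ _ ⟨w, hw, rfl⟩ hne
    exact ht.isIndepSet hv hw (ne_of_apply_ne _ hne)
  card_eq := by rw [Finset.card_map, ht.card_eq]

lemma indepSetFree_four_of_not_exists
    (h : ¬ ∃ a b c d : V, a ≠ b ∧ a ≠ c ∧ a ≠ d ∧ b ≠ c ∧ b ≠ d ∧ c ≠ d ∧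
      ¬ G.Adj a b ∧ ¬ G.Adj a c ∧ ¬ G.Adj a d ∧ ¬ G.Adj b c ∧ ¬ G.Adj b d ∧ ¬ G.Adj c d) :
    G.IndepSetFree 4 := by
  intro t ht
  let e : Fin 4 ≃ t := (Finset.equivFinOfCardEq ht.card_eq).symm
  have hne {i j : Fin 4} (hij : i ≠ j) : (e i : V) ≠ e j :=
    fun h ↦ hij (e.injective (Subtype.ext h))
  have hadj {i j : Fin 4} (hij : i ≠ j) : ¬ G.Adj (e i) (e j) :=
    ht.isIndepSet (e i).2 (e j).2 (hne hij)
  refine h ⟨e 0, e 1, e 2, e 3,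
    hne ?_, hne ?_, hne ?_, hne ?_, hne ?_, hne ?_,
    hadj ?_, hadj ?_, hadj ?_, hadj ?_, hadj ?_, hadj ?_⟩ <;> decide

theorem fourK1_free_short_path_general {k : ℕ} (hfree : G.IndepSetFree (k + 2)) {s : Set V}
    {u : V} (hu : u ∉ s) {a v : s} (hv : ∀ w : s, G.Adj u w → w = v)
    (hreach : (G.induce s).Reachable a v) : (G.induce s).edist a v ≤ (2 * k : ℕ) := by
  rw [← hreach.coe_dist_eq_edist, Nat.cast_le]
  by_contra! hlt
  obtain ⟨t, ht, hvt⟩ := exists_isNIndepSet_notMem_of_lt_dist hlt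
  have hut : u ∉ t.map (Function.Embedding.subtype (· ∈ s)) := fun h ↦
    hu (Finset.property_of_mem_map_subtype t h)
  refine hfree _ (isNIndepSet_cons (isNIndepSet_map_subtype ht) hut fun w hw hadj ↦ ?_)
  obtain ⟨w, hwt, rfl⟩ := Finset.mem_map.1 hw
  exact hvt (hv w hadj ▸ hwt)

end IndependentSets

/-- In a `4K₁`-free graph, let `u` be a vertex whose neighborhood is exactly `{v₁, v₂}` and let
`a ∉ {u, v₁, v₂}` be nonadjacent to `u`.  In the subgraph induced on the vertices other than
`u` and `v₂`, if `a` and `v₁` are connected then their distance is at most `4`. -/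
theorem fourK1_free_short_path {V : Type*} [Fintype V] (G : SimpleGraph V)
    (hfree : ¬ ∃ a b c d : V, a ≠ b ∧ a ≠ c ∧ a ≠ d ∧ b ≠ c ∧ b ≠ d ∧ c ≠ d ∧
      ¬ G.Adj a b ∧ ¬ G.Adj a c ∧ ¬ G.Adj a d ∧ ¬ G.Adj b c ∧ ¬ G.Adj b d ∧ ¬ G.Adj c d)
    (u v1 v2 a : V) (hv12 : v1 ≠ v2)
    (hN : G.neighborSet u = {v1, v2})
    (hau : a ≠ u) (hav1 : a ≠ v1) (hav2 : a ≠ v2) (hadj : ¬ G.Adj a u)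
    (ha : a ∈ {w : V | w ≠ u ∧ w ≠ v2}) (hv1 : v1 ∈ {w : V | w ≠ u ∧ w ≠ v2})
    (hreach : (G.induce {w : V | w ≠ u ∧ w ≠ v2}).Reachable ⟨a, ha⟩ ⟨v1, hv1⟩) :
    (G.induce {w : V | w ≠ u ∧ w ≠ v2}).dist ⟨a, ha⟩ ⟨v1, hv1⟩ ≤ 4 := by
  refine ENat.toNat_le_of_le_natCast (fourK1_free_short_path_general (k := 2)
    (indepSetFree_four_of_not_exists hfree) (fun h ↦ h.1 rfl) (fun w hw ↦ Subtype.ext ?_) hreach)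
  exact (hN.subset hw).resolve_right w.2.2
end

section
/- Let p ≥ 2 and let G be a connected finite simple graph on a nonempty vertex set that is (pK1+K2)-free. Then G has a dominating set of size at most p + 1, i.e., a set S of at most p + 1 vertices such that every vertex outside S has a neighbor in S. (This is the domination bound underlying the proof that such graphs have cop number at most p + 1.) -/
/-!
Starting from the two ends of an edge `yz`, keep adding an undominated vertex. The added vertices
are pairwise nonadjacent and nonadjacent to `y` and `z`, so if `G` is `(pK₁ + K₂)`-free the process
stops after at most `p - 1` additions.
-/

section Domination

variable {V : Type*} {G : SimpleGraph V} {S : Finset V} {u v : V} {n : ℕ}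

/-- Dominating sets of a graph, restricted to finite vertex sets `S`. -/
def IsDominating (G : SimpleGraph V) (S : Finset V) : Prop :=
  ∀ v, v ∉ S → ∃ s ∈ S, G.Adj v s

/-- The complement of the closed neighborhood `N[S]`: the vertices that keep `S` from being
dominating. -/
def undominated (G : SimpleGraph V) (S : Finset V) : Set V :=
  {v | v ∉ S ∧ ∀ s ∈ S, ¬ G.Adj v s}

theorem isDominating_iff_undominated_eq_empty : IsDominating G S ↔ undominated G S = ∅ := by
  simp [IsDominating, undominated, Set.eq_empty_iff_forall_notMem]

theorem mem_undominated_insert [DecidableEq V] :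
    u ∈ undominated G (insert v S) ↔ (u ≠ v ∧ ¬ G.Adj u v) ∧ u ∈ undominated G S := by
  simp only [undominated, Set.mem_ofPred_eq, Finset.mem_insert, not_or, forall_eq_or_imp]
  tauto

theorem indepSetFreeOn_undominated_insert [DecidableEq V] (hv : v ∈ undominated G S)
    (hS : G.IndepSetFreeOn (undominated G S) (n + 1)) :
    G.IndepSetFreeOn (undominated G (insert v S)) n := by
  intro I hI hIndep
  have hvI : ∀ u ∈ I, Gᶜ.Adj v u := fun u hu ↦
    .symm (mem_undominated_insert.mp (hI hu)).1
  have hInsert : G.IsNIndepSet (n + 1) (insert v I) :=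
    G.isNClique_compl.mp ((G.isNClique_compl.mpr hIndep).insert hvI)
  refine hS ?_ hInsert
  rw [Finset.coe_insert]
  exact Set.insert_subset hv fun u hu ↦ (mem_undominated_insert.mp (hI hu)).2

theorem exists_superset_isDominating_card_lt (hS : G.IndepSetFreeOn (undominated G S) n) :
    ∃ D, S ⊆ D ∧ D.card < S.card + n ∧ IsDominating G D := by
  classical
  induction n generalizing S with
  | zero => exact (hS (t := ∅) (by simp) (by simp [SimpleGraph.isNIndepSet_iff])).elim
  | succ n ih =>
    obtain hempty | ⟨v, hv⟩ := (undominated G S).eq_empty_or_nonempty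
    · exact ⟨S, subset_rfl, by lia, isDominating_iff_undominated_eq_empty.mpr hempty⟩
    · obtain ⟨D, hSD, hcard, hD⟩ := ih (indepSetFreeOn_undominated_insert hv hS)
      refine ⟨D, (Finset.subset_insert v S).trans hSD, ?_, hD⟩
      rw [Finset.card_insert_of_notMem hv.1] at hcard
      lia

end Domination

theorem pK1K2_free_dominating_set_general {V : Type*} (G : SimpleGraph V)
    (hG : Subsingleton V ∨ G ≠ ⊥) (p : ℕ)
    (hfree : ¬ ∃ (f : Fin p → V) (y z : V), Function.Injective f ∧
      (∀ i : Fin p, f i ≠ y) ∧ (∀ i : Fin p, f i ≠ z) ∧ y ≠ z ∧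
      G.Adj y z ∧ (∀ i j : Fin p, i ≠ j → ¬ G.Adj (f i) (f j)) ∧
      (∀ i : Fin p, ¬ G.Adj (f i) y) ∧ (∀ i : Fin p, ¬ G.Adj (f i) z)) :
    ∃ S : Finset V, S.card ≤ p + 1 ∧ ∀ v : V, v ∉ S → ∃ s ∈ S, G.Adj v s := by
  obtain hV | hne := hG
  · have := Fintype.ofFinite V
    exact ⟨Finset.univ, (Finset.card_le_one_of_subsingleton _).trans (by lia), by simp⟩
  · classical
    obtain ⟨y, z, hyz⟩ := SimpleGraph.ne_bot_iff_exists_adj.mp hne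
    have hindep : G.IndepSetFreeOn (undominated G {y, z}) p := by
      intro I hI hIndep
      let e := (I.equivFinOfCardEq hIndep.card_eq).symm
      have he (i : Fin p) : (e i ≠ y ∧ e i ≠ z) ∧ ¬ G.Adj (e i) y ∧ ¬ G.Adj (e i) z := by
        simpa [undominated] using hI (e i).2
      exact hfree ⟨fun i ↦ e i, y, z, Subtype.val_injective.comp e.injective,
        fun i ↦ (he i).1.1, fun i ↦ (he i).1.2, hyz.ne, hyz,
        fun i j hij ↦ hIndep.isIndepSet (e i).2 (e j).2 (by simpa [Subtype.ext_iff] using hij),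
        fun i ↦ (he i).2.1, fun i ↦ (he i).2.2⟩
    obtain ⟨D, -, hcard, hD⟩ := exists_superset_isDominating_card_lt hindep
    rw [Finset.card_pair hyz.ne] at hcard
    exact ⟨D, by lia, hD⟩

/-- Every connected `(pK₁ + K₂)`-free graph (`p ≥ 2`) on a nonempty finite vertex set has a
dominating set of size at most `p + 1`. -/
theorem pK1K2_free_dominating_set {V : Type*} [Fintype V] [Nonempty V]
    (G : SimpleGraph V) (hconn : G.Connected) (p : ℕ) (hp : 2 ≤ p)
    (hfree : ¬ ∃ (f : Fin p → V) (y z : V), Function.Injective f ∧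
      (∀ i : Fin p, f i ≠ y) ∧ (∀ i : Fin p, f i ≠ z) ∧ y ≠ z ∧
      G.Adj y z ∧ (∀ i j : Fin p, i ≠ j → ¬ G.Adj (f i) (f j)) ∧
      (∀ i : Fin p, ¬ G.Adj (f i) y) ∧ (∀ i : Fin p, ¬ G.Adj (f i) z)) :
    ∃ S : Finset V, S.card ≤ p + 1 ∧ ∀ v : V, v ∉ S → ∃ s ∈ S, G.Adj v s := by
  refine pK1K2_free_dominating_set_general G (or_iff_not_imp_right.mpr fun hG ↦ ?_) p hfree
  exact SimpleGraph.preconnected_bot_iff_subsingleton.mp (not_not.mp hG ▸ hconn.preconnected)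
end
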